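/- Let R be a commutative ring, G an abelian group, and RG the group ring of G over R; regard R as an RG-module via the augmentation map RG → R sending each element of G to 1. Suppose that every flat R-module has projective dimension at most s over R, and that R has projective dimension at most r as an RG-module. Then every flat RG-module has projective dimension at most s + r over RG. (That is, cot.D(RG) ≤ cot.D(R) + pd_{RG}(R).) -/

import Mathlib

open CategoryTheory

noncomputable section

universe u

/-- The `j`-th Ext group of the `R`-modules `M` and `N`. -/
def extGroup (R : Type u) [CommRing R] (M N : ModuleCat.{u} R) (j : ℕ) : ModuleCat R :=
  ((Ext R (ModuleCat.{u} R) j).obj (Opposite.op M)).obj N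

/-- `Ext_R^j(M, N) = 0`. -/
def ExtVanish (R : Type u) [CommRing R] (M N : ModuleCat.{u} R) (j : ℕ) : Prop :=
  Subsingleton (extGroup R M N j)

/-- The projective dimension of `M` is at most `n`
(via the standard Ext-vanishing characterization). -/
def ProjDimLE (R : Type u) [CommRing R] (M : ModuleCat.{u} R) (n : ℕ) : Prop :=
  ∀ (N : ModuleCat.{u} R) (j : ℕ), n < j → ExtVanish R M N j

/-- `M` has finite projective dimension. -/
def HasFinProjDim (R : Type u) [CommRing R] (M : ModuleCat.{u} R) : Prop :=
  ∃ n, ProjDimLE R M n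

/-- `R` is a coherent ring: every finitely generated ideal is finitely presented. -/
def IsCoherentRing (R : Type u) [CommRing R] : Prop :=
  ∀ I : Ideal R, I.FG → Module.FinitePresentation R I
/-- The augmentation ring homomorphism `RG → R`, sending each element of `G` to `1`. -/
def augmentation (R : Type u) [CommRing R] (G : Type u) [CommGroup G] :
    MonoidAlgebra R G →+* R :=
  ((MonoidAlgebra.lift R R G) 1).toRingHom

/- A representation `A` of `G` whose underlying module is `R`-projective has projective dimension at
most that of the trivial representation: `A ⊗ -` is exact, preserves projectives because its right
adjoint `Hom(A, -)` preserves epimorphisms, and sends the trivial representation to `A`. Dimension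
shifting along a projective resolution over `RG` reduces the general case to this one, since
restriction of scalars to `R` is exact and preserves projectives. -/

section Abelian

open Limits

universe v₁ v₂ u₁ u₂

variable {C : Type u₁} [Category.{v₁} C] [Abelian C]

theorem subsingleton_ext_succ_iff [HasExt.{u} C] {X Y : C} (P : ProjectiveResolution X) (j : ℕ) :
    Subsingleton (Abelian.Ext.{u} X Y (j + 1)) ↔
      ∀ f : P.complex.X (j + 1) ⟶ Y, P.complex.d (j + 2) (j + 1) ≫ f = 0 →
        ∃ g : P.complex.X j ⟶ Y, P.complex.d (j + 1) j ≫ g = f := by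
  constructor
  · intro h f hf
    rw [← P.extMk_eq_zero_iff f (j + 2) rfl hf j rfl]
    exact Subsingleton.elim _ _
  · intro h
    refine subsingleton_of_forall_eq 0 fun α => ?_
    obtain ⟨f, hf, rfl⟩ := P.extMk_surjective α (j + 2) rfl
    rw [P.extMk_eq_zero_iff f (j + 2) rfl hf j rfl]
    exact h f hf

variable [EnoughProjectives C]

theorem exists_shortExact_projective (X : C) :
    ∃ S : ShortComplex C, S.ShortExact ∧ Projective S.X₂ ∧ S.X₃ = X := by
  let P : ProjectivePresentation X := Classical.arbitrary _
  exact ⟨.mk _ _ (kernel.condition P.f), { exact := ShortComplex.exact_kernel P.f },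
    P.projective, rfl⟩

variable {D : Type u₂} [Category.{v₂} D] [Abelian D] {X : C}

theorem hasProjectiveDimensionLE_map (F : C ⥤ D) [PreservesFiniteLimits F]
    [PreservesFiniteColimits F] [F.PreservesProjectiveObjects] {n : ℕ}
    (hX : HasProjectiveDimensionLE X n) : HasProjectiveDimensionLE (F.obj X) n := by
  induction n generalizing X with
  | zero =>
    rw [← projective_iff_hasProjectiveDimensionLE_zero] at hX ⊢
    exact F.projective_obj X
  | succ n ih =>
    obtain ⟨S, hS, hP, rfl⟩ := exists_shortExact_projective X
    have hK : HasProjectiveDimensionLE S.X₁ n := (hS.hasProjectiveDimensionLT_X₃_iff n hP).1 hX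
    exact ((hS.map_of_exact F).hasProjectiveDimensionLT_X₃_iff n (F.projective_obj S.X₂)).2
      (ih hK)

theorem hasProjectiveDimensionLE_of_map_isEquivalence (F : D ⥤ C) [F.IsEquivalence] {Y : D} {n : ℕ}
    (h : HasProjectiveDimensionLE (F.obj Y) n) : HasProjectiveDimensionLE Y n :=
  have : HasProjectiveDimensionLE (F.inv.obj (F.obj Y)) n := hasProjectiveDimensionLE_map F.inv h
  let e : F.inv.obj (F.obj Y) ≅ Y := (F.asEquivalence.unitIso.app Y).symm
  hasProjectiveDimensionLT_of_iso e (n + 1)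

theorem hasProjectiveDimensionLE_add_of_map (F : C ⥤ D) [PreservesFiniteLimits F]
    [PreservesFiniteColimits F] [F.PreservesProjectiveObjects] {s r : ℕ}
    (h : ∀ Y : C, Projective (F.obj Y) → HasProjectiveDimensionLE Y r)
    (hX : HasProjectiveDimensionLE (F.obj X) s) : HasProjectiveDimensionLE X (s + r) := by
  induction s generalizing X with
  | zero =>
    rw [← projective_iff_hasProjectiveDimensionLE_zero] at hX
    rw [zero_add]
    exact h X hX
  | succ s ih =>
    obtain ⟨S, hS, hP, rfl⟩ := exists_shortExact_projective X
    have hK : HasProjectiveDimensionLE (F.obj S.X₁) s :=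
      ((hS.map_of_exact F).hasProjectiveDimensionLT_X₃_iff s (F.projective_obj S.X₂)).1 hX
    rw [Nat.add_right_comm]
    exact (hS.hasProjectiveDimensionLT_X₃_iff (s + r) hP).2 (ih hK)

end Abelian

section ProjDimLE

variable (R : Type u) [CommRing R] (M N : ModuleCat.{u} R)

variable {R M} in
theorem extVanish_succ_iff (P : ProjectiveResolution M) (j : ℕ) :
    ExtVanish R M N (j + 1) ↔
      ∀ f : P.complex.X (j + 1) ⟶ N, P.complex.d (j + 2) (j + 1) ≫ f = 0 →
        ∃ g : P.complex.X j ⟶ N, P.complex.d (j + 1) j ≫ g = f := by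
  unfold ExtVanish extGroup
  rw [← ModuleCat.isZero_iff_subsingleton, (P.isoExt (R := R) (j + 1) N).isZero_iff,
    ← HomologicalComplex.exactAt_iff_isZero_homology,
    HomologicalComplex.exactAt_iff' _ j (j + 1) (j + 2) (by simp) (by simp),
    ShortComplex.moduleCat_exact_iff]
  rfl

theorem extVanish_succ_iff_subsingleton_ext (j : ℕ) :
    ExtVanish R M N (j + 1) ↔ Subsingleton (Abelian.Ext.{u} M N (j + 1)) := by
  rw [extVanish_succ_iff N (projectiveResolution M), subsingleton_ext_succ_iff]

theorem projDimLE_iff_hasProjectiveDimensionLE (n : ℕ) :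
    ProjDimLE R M n ↔ HasProjectiveDimensionLE M n := by
  constructor
  · intro h
    refine .mk fun i hi N e => ?_
    obtain ⟨j, rfl⟩ := Nat.exists_eq_add_one_of_ne_zero (by omega : i ≠ 0)
    have := (extVanish_succ_iff_subsingleton_ext R M N j).1 (h N (j + 1) hi)
    exact Subsingleton.elim _ _
  · intro h N i hi
    obtain ⟨j, rfl⟩ := Nat.exists_eq_add_one_of_ne_zero (by omega : i ≠ 0)
    exact (extVanish_succ_iff_subsingleton_ext R M N j).2 (h.subsingleton M (n + 1) (j + 1) hi N)

end ProjDimLE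

section RestrictScalars

open Limits

instance restrictScalars_preservesFiniteLimits {R S : Type*} [Ring R] [Ring S] (f : R →+* S) :
    PreservesFiniteLimits (ModuleCat.restrictScalars.{u} f) :=
  have := Functor.preservesHomology_of_preservesMonos_and_cokernels
    (ModuleCat.restrictScalars.{u} f)
  Functor.preservesFiniteLimits_of_preservesHomology _

theorem projective_trans (R S M : Type*) [CommRing R] [Ring S] [Algebra R S] [AddCommGroup M]
    [Module R M] [Module S M] [IsScalarTower R S M] [Module.Projective R S]
    [Module.Projective S M] : Module.Projective R M := by
  classical
  obtain ⟨s, hs⟩ := Module.projective_def'.1 ‹Module.Projective S M›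
  have : Module.Projective R (M →₀ S) := .of_equiv (finsuppLequivDFinsupp R).symm
  exact .of_split (s.restrictScalars R) ((Finsupp.linearCombination S id).restrictScalars R)
    (LinearMap.ext (DFunLike.congr_fun hs ·))

instance restrictScalars_preservesProjectiveObjects {R S : Type u} [CommRing R] [Ring S]
    [Algebra R S] [Module.Projective R S] :
    (ModuleCat.restrictScalars.{u} (algebraMap R S)).PreservesProjectiveObjects where
  projective_obj {P} hP := by
    rw [← IsProjective.iff_projective] at hP ⊢
    let : Module R P := Module.compHom P (algebraMap R S)
    have : IsScalarTower R S P := .of_algebraMap_smul fun _ _ => rfl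
    exact projective_trans R S P

theorem flat_restrictScalars (R : Type*) {S : Type*} [CommRing R] [CommRing S] [Algebra R S]
    [Module.Flat R S] (M : ModuleCat.{u} S) [Module.Flat S M] :
    Module.Flat R ((ModuleCat.restrictScalars (algebraMap R S)).obj M) :=
  let : Module R M := Module.compHom M (algebraMap R S)
  have : IsScalarTower R S M := .of_algebraMap_smul fun _ _ => rfl
  Module.Flat.trans R S M

end RestrictScalars

section Rep

open Limits MonoidalCategory

universe v

variable {R : Type u} [CommRing R] {G : Type v} [Group G]

instance tensorLeft_preservesFiniteLimits (A : Rep.{u} R G) [Module.Flat R A] :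
    PreservesFiniteLimits (tensorLeft A) := by
  have : (tensorLeft A).PreservesMonomorphisms := ⟨fun f hf => by
    rw [Rep.mono_iff_injective] at hf ⊢
    exact Module.Flat.lTensor_preserves_injective_linearMap f.hom.toLinearMap hf⟩
  have := Functor.preservesHomology_of_preservesMonos_and_cokernels (tensorLeft A)
  exact Functor.preservesFiniteLimits_of_preservesHomology _

instance tensorLeft_preservesProjectiveObjects (A : Rep.{u} R G) [Module.Projective R A] :
    (tensorLeft A).PreservesProjectiveObjects := by
  have : (ihom A).PreservesEpimorphisms := ⟨fun f hf => by
    rw [Rep.epi_iff_surjective] at hf ⊢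
    exact fun φ => Module.projective_lifting_property f.hom.toLinearMap φ hf⟩
  exact Functor.preservesProjectiveObjects_of_adjunction_of_preservesEpimorphisms
    (ihom.adjunction A)

end Rep

section TrivialModule

open MonoidalCategory

theorem asAlgebraHom_trivial_apply {R G : Type*} [CommSemiring R] [Monoid G]
    (a : MonoidAlgebra R G) (x : R) :
    (Representation.trivial R G R).asAlgebraHom a x = MonoidAlgebra.lift R R G 1 a * x := by
  have h : (Representation.trivial R G R).asAlgebraHom =
      (Algebra.lmul R R).comp (MonoidAlgebra.lift R R G 1) := by
    ext
    simp
  exact LinearMap.congr_fun (DFunLike.congr_fun h a) x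

/-- The base ring `R` as a module over `RG` through the augmentation map `RG → R`. For commutative
`G` the action is the one induced by `augmentation`. -/
def trivialModule (R G : Type u) [CommRing R] [Group G] : ModuleCat.{u} (MonoidAlgebra R G) :=
  letI := Module.compHom R (MonoidAlgebra.lift R R G 1).toRingHom
  .of _ R

variable {R G : Type u} [CommRing R] [Group G] {r : ℕ}

variable (R G) in
/-- The equivalence between representations and `RG`-modules sends the trivial representation on
`R`, the tensor unit, to the trivial module. -/
def toModuleMonoidAlgebraUnitIso :
    Rep.toModuleMonoidAlgebra.obj (𝟙_ (Rep.{u} R G)) ≅ trivialModule R G :=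
  letI := Module.compHom R (MonoidAlgebra.lift R R G 1).toRingHom
  LinearEquiv.toModuleIso (R := MonoidAlgebra R G)
    { (Representation.trivial R G R).asModuleEquiv.toAddEquiv with
      map_smul' := asAlgebraHom_trivial_apply }

theorem hasProjectiveDimensionLE_of_tensorUnit (A : Rep.{u} R G) [Module.Projective R A]
    (h : HasProjectiveDimensionLE (𝟙_ (Rep.{u} R G)) r) : HasProjectiveDimensionLE A r :=
  have : HasProjectiveDimensionLE (A ⊗ 𝟙_ (Rep.{u} R G)) r :=
    hasProjectiveDimensionLE_map (tensorLeft A) h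
  hasProjectiveDimensionLT_of_iso (ρ_ A) (r + 1)

theorem hasProjectiveDimensionLE_of_projective_restrictScalars
    (hr : HasProjectiveDimensionLE (trivialModule R G) r) (M : ModuleCat.{u} (MonoidAlgebra R G))
    (hM : Projective ((ModuleCat.restrictScalars (algebraMap R (MonoidAlgebra R G))).obj M)) :
    HasProjectiveDimensionLE M r := by
  have hunit : HasProjectiveDimensionLE (𝟙_ (Rep.{u} R G)) r :=
    hasProjectiveDimensionLE_of_map_isEquivalence (Rep.toModuleMonoidAlgebra (k := R) (G := G))
      (hasProjectiveDimensionLT_of_iso (toModuleMonoidAlgebraUnitIso R G).symm (r + 1))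
  have : Module.Projective R (Rep.ofModuleMonoidAlgebra.obj M) :=
    (IsProjective.iff_projective _).2 hM
  exact hasProjectiveDimensionLE_of_map_isEquivalence Rep.ofModuleMonoidAlgebra
    (hasProjectiveDimensionLE_of_tensorUnit _ hunit)

end TrivialModule

theorem stmt9_general {R G : Type u} [CommRing R] [Group G] {s r : ℕ}
    (hr : HasProjectiveDimensionLE (trivialModule R G) r) (M : ModuleCat.{u} (MonoidAlgebra R G))
    (hM : HasProjectiveDimensionLE
      ((ModuleCat.restrictScalars (algebraMap R (MonoidAlgebra R G))).obj M) s) :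
    HasProjectiveDimensionLE M (s + r) :=
  hasProjectiveDimensionLE_add_of_map _ (hasProjectiveDimensionLE_of_projective_restrictScalars hr)
    hM

theorem stmt9 (R : Type u) [CommRing R] (G : Type u) [CommGroup G] (s r : ℕ)
    (hR : ∀ (F : ModuleCat.{u} R), Module.Flat R F → ProjDimLE R F s)
    (hr : letI : Module (MonoidAlgebra R G) R := Module.compHom R (augmentation R G)
      ProjDimLE (MonoidAlgebra R G) (ModuleCat.of (MonoidAlgebra R G) R) r) :
    ∀ (F : ModuleCat.{u} (MonoidAlgebra R G)), Module.Flat (MonoidAlgebra R G) F →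
      ProjDimLE (MonoidAlgebra R G) F (s + r) := by
  simp only [projDimLE_iff_hasProjectiveDimensionLE] at hR hr ⊢
  intro F _
  exact stmt9_general hr F (hR _ (flat_restrictScalars R F))

end
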